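/- Let Λ₁ ∈ S^k₊ and Λ₂ ∈ S^m₊ with Moore–Penrose pseudoinverses Λ₁†, Λ₂†. Let X ∈ Sⁿ₊ with Moore–Penrose pseudoinverse X†, and let Y ∈ ℝ^{n×k}, Z ∈ ℝ^{n×m} satisfy range(Yᵀ) ⊆ range(Λ₁), range(Zᵀ) ⊆ range(Λ₂), range(Y) ⊆ range(X) and range(Z) ⊆ range(X). Then a triple (A,B,C) ∈ O_Λ satisfies X·A + Y·B + Z·C = (1/2)·(YΛ₁†)·(X†(YΛ₁†)) + (1/2)·(ZΛ₂†)·(X†(ZΛ₂†)) if and only if Y = X B Λ₁², Z = X C Λ₂², and X·(A + (1/2)·B Λ₁² Bᵀ + (1/2)·C Λ₂² Cᵀ) = 0. -/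

import Mathlib

/-!
For `X ⪰ 0`, expanding `(X (G - U)) · (G - U) ≥ 0` gives the Fenchel–Young inequality
`2 (X U) · G ≤ (X G) · G + (X U) · U`, with equality iff `X U = X G`. Take `G = B Λ₁` and
`U = X† Y Λ₁†`: the range conditions turn `X U` into `Y Λ₁†` and `(X U) · G` into `Y · B`, so
`2 Y · B ≤ X · (B Λ₁² Bᵀ) + (Y Λ₁†) · (X† Y Λ₁†)`, with equality iff `Y = X B Λ₁²`.
Adding half of this, half of its analogue for `Z`, and `X · (A + ½ B Λ₁² Bᵀ + ½ C Λ₂² Cᵀ) ≤ 0`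
bounds `X · A + Y · B + Z · C` by the stated value, and equality in the sum forces equality in each
of the three.
-/

open Matrix

/-- The Frobenius inner product `A · B = trace (Aᵀ * B)` of two real matrices. -/
noncomputable def frobInner {p q : ℕ} (A B : Matrix (Fin p) (Fin q) ℝ) : ℝ :=
  (Aᵀ * B).trace

/-- `X` is the Moore–Penrose pseudoinverse of `A`. -/
def IsMoorePenrose {p q : ℕ} (A : Matrix (Fin p) (Fin q) ℝ) (X : Matrix (Fin q) (Fin p) ℝ) :
    Prop :=
  (X * A)ᵀ = X * A ∧ (A * X)ᵀ = A * X ∧ X * A * X = X ∧ A * X * A = A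

/-- The constraint set
`O_Λ = {(A,B,C) ∈ Sⁿ × ℝ^{n×k} × ℝ^{n×m} : A + ½·B Λ₁² Bᵀ + ½·C Λ₂² Cᵀ ⪯ 0}`. -/
def OLam (n k m : ℕ) (Λ₁ : Matrix (Fin k) (Fin k) ℝ) (Λ₂ : Matrix (Fin m) (Fin m) ℝ) :
    Set (Matrix (Fin n) (Fin n) ℝ × Matrix (Fin n) (Fin k) ℝ × Matrix (Fin n) (Fin m) ℝ) :=
  {p | p.1.IsSymm ∧
    (-(p.1 + (1 / 2 : ℝ) • (p.2.1 * Λ₁ ^ 2 * p.2.1ᵀ) +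
        (1 / 2 : ℝ) • (p.2.2 * Λ₂ ^ 2 * p.2.2ᵀ))).PosSemidef}

section Range

variable {l m n R : Type*} [Fintype l] [Fintype n] [CommSemiring R]

lemma exists_eq_mul_of_range_mulVecLin_le {M : Matrix m n R} {A : Matrix m l R}
    (h : LinearMap.range M.mulVecLin ≤ LinearMap.range A.mulVecLin) :
    ∃ K : Matrix l n R, M = A * K := by
  classical
  have hcol (j : n) : ∃ v, A *ᵥ v = M.col j := by
    obtain ⟨v, hv⟩ := h ⟨Pi.single j 1, rfl⟩
    exact ⟨v, by simpa using hv⟩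
  choose v hv using hcol
  exact ⟨(Matrix.of v)ᵀ, Matrix.ext fun i j ↦ (congrFun (hv j) i).symm⟩

lemma mul_mul_eq_of_range_mulVecLin_le [Fintype m] {A : Matrix m l R} {G : Matrix l m R}
    (hG : A * G * A = A) {M : Matrix m n R}
    (h : LinearMap.range M.mulVecLin ≤ LinearMap.range A.mulVecLin) :
    A * G * M = M := by
  obtain ⟨K, rfl⟩ := exists_eq_mul_of_range_mulVecLin_le h
  rw [← Matrix.mul_assoc, hG]

lemma mul_mul_eq_of_range_transpose_mulVecLin_le [Fintype m] {A : Matrix l m R}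
    {G : Matrix m l R} (hG : A * G * A = A) {M : Matrix n m R}
    (h : LinearMap.range Mᵀ.mulVecLin ≤ LinearMap.range Aᵀ.mulVecLin) :
    M * G * A = M := by
  obtain ⟨K, hK⟩ := exists_eq_mul_of_range_mulVecLin_le h
  obtain rfl : M = Kᵀ * A := by
    rw [← transpose_transpose M, hK, transpose_mul, transpose_transpose]
  rw [Matrix.mul_assoc, Matrix.mul_assoc, ← Matrix.mul_assoc A, hG]

end Range

section PosSemidef

open scoped ComplexOrder MatrixOrder

variable {m n 𝕜 : Type*} [Fintype m] [Fintype n] [RCLike 𝕜]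

lemma trace_mul_nonneg_of_posSemidef {X N : Matrix n n 𝕜} (hX : X.PosSemidef)
    (hN : N.PosSemidef) : 0 ≤ (X * N).trace := by
  classical
  obtain ⟨P, rfl⟩ := CStarAlgebra.nonneg_iff_eq_star_mul_self.mp hX.nonneg
  rw [star_eq_conjTranspose, ← trace_mul_cycle]
  exact (hN.mul_mul_conjTranspose_same P).trace_nonneg

lemma trace_conjTranspose_mul_mul_eq_zero_iff_of_posSemidef {X : Matrix n n 𝕜} (hX : X.PosSemidef)
    (D : Matrix n m 𝕜) : (Dᴴ * X * D).trace = 0 ↔ X * D = 0 := by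
  classical
  obtain ⟨P, rfl⟩ := CStarAlgebra.nonneg_iff_eq_star_mul_self.mp hX.nonneg
  have hgram : Dᴴ * (Pᴴ * P) * D = (P * D)ᴴ * (P * D) := by
    simp only [conjTranspose_mul, Matrix.mul_assoc]
  rw [star_eq_conjTranspose, hgram, trace_conjTranspose_mul_self_eq_zero_iff,
    conjTranspose_mul_self_mul_eq_zero]

end PosSemidef

section FrobInner

variable {p q r : ℕ}

lemma frobInner_comm (A B : Matrix (Fin p) (Fin q) ℝ) : frobInner A B = frobInner B A := by
  rw [frobInner, ← trace_transpose, transpose_mul, transpose_transpose, frobInner]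

lemma frobInner_add_right (A B C : Matrix (Fin p) (Fin q) ℝ) :
    frobInner A (B + C) = frobInner A B + frobInner A C := by
  simp only [frobInner, Matrix.mul_add, trace_add]

lemma frobInner_smul_right (c : ℝ) (A B : Matrix (Fin p) (Fin q) ℝ) :
    frobInner A (c • B) = c * frobInner A B := by
  simp only [frobInner, Matrix.mul_smul, trace_smul, smul_eq_mul]

lemma frobInner_mul_left (M : Matrix (Fin p) (Fin r) ℝ) (A : Matrix (Fin r) (Fin q) ℝ)
    (B : Matrix (Fin p) (Fin q) ℝ) : frobInner (M * A) B = frobInner A (Mᵀ * B) := by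
  rw [frobInner, frobInner, transpose_mul, Matrix.mul_assoc]

lemma frobInner_mul_right (A : Matrix (Fin p) (Fin q) ℝ) (B : Matrix (Fin p) (Fin r) ℝ)
    (M : Matrix (Fin r) (Fin q) ℝ) : frobInner A (B * M) = frobInner (A * Mᵀ) B := by
  rw [frobInner, frobInner, transpose_mul, transpose_transpose, ← Matrix.mul_assoc,
    trace_mul_comm, Matrix.mul_assoc]

variable {X : Matrix (Fin p) (Fin p) ℝ}

lemma frobInner_nonpos_of_posSemidef_neg (hX : X.PosSemidef) {N : Matrix (Fin p) (Fin p) ℝ}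
    (hN : (-N).PosSemidef) : frobInner X N ≤ 0 := by
  simpa [frobInner] using trace_mul_nonneg_of_posSemidef hX.transpose hN

lemma frobInner_mul_self_nonneg (hX : X.PosSemidef) (D : Matrix (Fin p) (Fin q) ℝ) :
    0 ≤ frobInner (X * D) D := by
  simpa [frobInner] using (hX.transpose.conjTranspose_mul_mul_same D).trace_nonneg

lemma frobInner_mul_self_eq_zero_iff (hX : X.PosSemidef) (D : Matrix (Fin p) (Fin q) ℝ) :
    frobInner (X * D) D = 0 ↔ X * D = 0 := by
  have hXs : Xᵀ = X := hX.isHermitian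
  simpa [frobInner, hXs] using trace_conjTranspose_mul_mul_eq_zero_iff_of_posSemidef hX D

lemma frobInner_mul_sub_self (hX : X.IsSymm) (G U : Matrix (Fin p) (Fin q) ℝ) :
    frobInner (X * (G - U)) (G - U) =
      frobInner (X * G) G - 2 * frobInner (X * U) G + frobInner (X * U) U := by
  have hcross : frobInner (X * G) U = frobInner (X * U) G := by
    rw [frobInner_mul_left, hX.eq, frobInner_comm]
  have hexpand : frobInner (X * (G - U)) (G - U) =
      frobInner (X * G) G - frobInner (X * G) U - (frobInner (X * U) G - frobInner (X * U) U) := by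
    simp only [frobInner, Matrix.mul_sub, Matrix.sub_mul, transpose_sub, trace_sub]
    ring
  rw [hexpand, hcross]
  ring

lemma two_mul_frobInner_mul_le (hX : X.PosSemidef) (G U : Matrix (Fin p) (Fin q) ℝ) :
    2 * frobInner (X * U) G ≤ frobInner (X * G) G + frobInner (X * U) U := by
  have hXs : X.IsSymm := isHermitian_iff_isSymm.mp hX.isHermitian
  linarith [frobInner_mul_self_nonneg hX (G - U), frobInner_mul_sub_self hXs G U]

lemma two_mul_frobInner_mul_eq_iff (hX : X.PosSemidef) (G U : Matrix (Fin p) (Fin q) ℝ) :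
    2 * frobInner (X * U) G = frobInner (X * G) G + frobInner (X * U) U ↔ X * U = X * G := by
  have hXs : X.IsSymm := isHermitian_iff_isSymm.mp hX.isHermitian
  rw [eq_comm (a := X * U), ← sub_eq_zero (a := X * G), ← Matrix.mul_sub,
    ← frobInner_mul_self_eq_zero_iff hX, frobInner_mul_sub_self hXs]
  constructor <;> intro h <;> linarith

lemma frobInner_mul_mul_self {L : Matrix (Fin q) (Fin q) ℝ} (hL : L.IsSymm)
    (X : Matrix (Fin p) (Fin p) ℝ) (B : Matrix (Fin p) (Fin q) ℝ) :
    frobInner (X * (B * L)) (B * L) = frobInner X (B * L ^ 2 * Bᵀ) := by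
  calc frobInner (X * (B * L)) (B * L) = frobInner (X * B * L) (B * L) := by rw [Matrix.mul_assoc]
    _ = frobInner (X * B) (B * L * L) := by rw [frobInner_mul_right _ (B * L), hL.eq]
    _ = frobInner X (B * L ^ 2 * Bᵀ) := by
      rw [frobInner_mul_right X, transpose_transpose, pow_two, Matrix.mul_assoc B]

end FrobInner

namespace IsMoorePenrose

section Cancel

variable {p q r s : ℕ}

lemma mul_mul_mul_cancel_of_range_le {A : Matrix (Fin p) (Fin q) ℝ} {Ad : Matrix (Fin q) (Fin p) ℝ}
    (hAd : IsMoorePenrose A Ad) {M : Matrix (Fin p) (Fin r) ℝ}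
    (h : LinearMap.range M.mulVecLin ≤ LinearMap.range A.mulVecLin)
    (N : Matrix (Fin r) (Fin s) ℝ) : A * (Ad * (M * N)) = M * N := by
  rw [← Matrix.mul_assoc, ← Matrix.mul_assoc, mul_mul_eq_of_range_mulVecLin_le hAd.2.2.2 h]

variable {L Ld : Matrix (Fin q) (Fin q) ℝ}

lemma mul_mul_cancel_of_range_transpose_le (hLd : IsMoorePenrose L Ld) (hL : L.IsSymm)
    {M : Matrix (Fin p) (Fin q) ℝ}
    (h : LinearMap.range Mᵀ.mulVecLin ≤ LinearMap.range L.mulVecLin) : M * Ld * L = M :=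
  mul_mul_eq_of_range_transpose_mulVecLin_le hLd.2.2.2 (by rwa [hL.eq])

lemma sq_mul_pinv (hLd : IsMoorePenrose L Ld) (hL : L.IsSymm) : L ^ 2 * Ld = L := by
  obtain ⟨-, hproj, -, hinv⟩ := hLd
  calc L ^ 2 * Ld = Lᵀ * (L * Ld)ᵀ := by rw [hL.eq, hproj, pow_two, Matrix.mul_assoc]
    _ = (L * Ld * L)ᵀ := (transpose_mul _ _).symm
    _ = L := by rw [hinv, hL.eq]

lemma mul_pinv_eq_mul_iff (hLd : IsMoorePenrose L Ld) (hL : L.IsSymm)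
    {M : Matrix (Fin p) (Fin q) ℝ}
    (h : LinearMap.range Mᵀ.mulVecLin ≤ LinearMap.range L.mulVecLin)
    (V : Matrix (Fin p) (Fin q) ℝ) : M * Ld = V * L ↔ M = V * L ^ 2 := by
  constructor
  · intro hV
    rw [pow_two, ← Matrix.mul_assoc, ← hV, hLd.mul_mul_cancel_of_range_transpose_le hL h]
  · rintro rfl
    rw [Matrix.mul_assoc, hLd.sq_mul_pinv hL]

lemma frobInner_mul_mul_cancel (hLd : IsMoorePenrose L Ld) (hL : L.IsSymm)
    {M : Matrix (Fin p) (Fin q) ℝ}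
    (h : LinearMap.range Mᵀ.mulVecLin ≤ LinearMap.range L.mulVecLin)
    (B : Matrix (Fin p) (Fin q) ℝ) : frobInner (M * Ld) (B * L) = frobInner M B := by
  rw [frobInner_mul_right, hL.eq, hLd.mul_mul_cancel_of_range_transpose_le hL h]

end Cancel

section FenchelYoung

variable {n k : ℕ} {L Ld : Matrix (Fin k) (Fin k) ℝ} {X Xd : Matrix (Fin n) (Fin n) ℝ}
  {Y : Matrix (Fin n) (Fin k) ℝ}

lemma two_mul_frobInner_le (hLd : IsMoorePenrose L Ld) (hL : L.IsSymm)
    (hXd : IsMoorePenrose X Xd) (hX : X.PosSemidef)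
    (hYL : LinearMap.range Yᵀ.mulVecLin ≤ LinearMap.range L.mulVecLin)
    (hYX : LinearMap.range Y.mulVecLin ≤ LinearMap.range X.mulVecLin)
    (B : Matrix (Fin n) (Fin k) ℝ) :
    2 * frobInner Y B ≤
      frobInner X (B * L ^ 2 * Bᵀ) + frobInner (Y * Ld) (Xd * (Y * Ld)) := by
  simpa only [hXd.mul_mul_mul_cancel_of_range_le hYX, hLd.frobInner_mul_mul_cancel hL hYL,
    frobInner_mul_mul_self hL] using
    two_mul_frobInner_mul_le hX (B * L) (Xd * (Y * Ld))

lemma two_mul_frobInner_eq_iff (hLd : IsMoorePenrose L Ld) (hL : L.IsSymm)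
    (hXd : IsMoorePenrose X Xd) (hX : X.PosSemidef)
    (hYL : LinearMap.range Yᵀ.mulVecLin ≤ LinearMap.range L.mulVecLin)
    (hYX : LinearMap.range Y.mulVecLin ≤ LinearMap.range X.mulVecLin)
    (B : Matrix (Fin n) (Fin k) ℝ) :
    2 * frobInner Y B =
        frobInner X (B * L ^ 2 * Bᵀ) + frobInner (Y * Ld) (Xd * (Y * Ld)) ↔
      Y = X * B * L ^ 2 := by
  rw [← hLd.mul_pinv_eq_mul_iff hL hYL, Matrix.mul_assoc X]
  simpa only [hXd.mul_mul_mul_cancel_of_range_le hYX, hLd.frobInner_mul_mul_cancel hL hYL,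
    frobInner_mul_mul_self hL] using
    two_mul_frobInner_mul_eq_iff hX (B * L) (Xd * (Y * Ld))

end FenchelYoung

end IsMoorePenrose

theorem weighted_action_maximizer_iff_general (n k m : ℕ)
    (Λ₁ Λ₁d : Matrix (Fin k) (Fin k) ℝ) (Λ₂ Λ₂d : Matrix (Fin m) (Fin m) ℝ)
    (X Xd : Matrix (Fin n) (Fin n) ℝ)
    (Y : Matrix (Fin n) (Fin k) ℝ) (Z : Matrix (Fin n) (Fin m) ℝ)
    (hΛ₁ : Λ₁.IsSymm) (hΛ₂ : Λ₂.IsSymm) (hX : X.PosSemidef)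
    (hΛ₁d : IsMoorePenrose Λ₁ Λ₁d) (hΛ₂d : IsMoorePenrose Λ₂ Λ₂d)
    (hXd : IsMoorePenrose X Xd)
    (hY1 : LinearMap.range (Yᵀ).mulVecLin ≤ LinearMap.range Λ₁.mulVecLin)
    (hZ1 : LinearMap.range (Zᵀ).mulVecLin ≤ LinearMap.range Λ₂.mulVecLin)
    (hY2 : LinearMap.range Y.mulVecLin ≤ LinearMap.range X.mulVecLin)
    (hZ2 : LinearMap.range Z.mulVecLin ≤ LinearMap.range X.mulVecLin)
    (A : Matrix (Fin n) (Fin n) ℝ) (B : Matrix (Fin n) (Fin k) ℝ)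
    (C : Matrix (Fin n) (Fin m) ℝ) (hmem : (A, B, C) ∈ OLam n k m Λ₁ Λ₂) :
    frobInner X A + frobInner Y B + frobInner Z C =
        (1 / 2) * frobInner (Y * Λ₁d) (Xd * (Y * Λ₁d)) +
          (1 / 2) * frobInner (Z * Λ₂d) (Xd * (Z * Λ₂d)) ↔
      (Y = X * B * Λ₁ ^ 2 ∧ Z = X * C * Λ₂ ^ 2 ∧
        frobInner X (A + (1 / 2 : ℝ) • (B * Λ₁ ^ 2 * Bᵀ) +
          (1 / 2 : ℝ) • (C * Λ₂ ^ 2 * Cᵀ)) = 0) := by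
  obtain ⟨-, hN⟩ := hmem
  have hYB := hΛ₁d.two_mul_frobInner_le hΛ₁ hXd hX hY1 hY2 B
  have hZC := hΛ₂d.two_mul_frobInner_le hΛ₂ hXd hX hZ1 hZ2 C
  have hslack := frobInner_nonpos_of_posSemidef_neg hX hN
  rw [← hΛ₁d.two_mul_frobInner_eq_iff hΛ₁ hXd hX hY1 hY2 B,
    ← hΛ₂d.two_mul_frobInner_eq_iff hΛ₂ hXd hX hZ1 hZ2 C]
  simp only [frobInner_add_right, frobInner_smul_right] at hslack ⊢
  constructor
  · intro h
    refine ⟨?_, ?_, ?_⟩ <;> linarith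
  · rintro ⟨hYB_eq, hZC_eq, hslack_eq⟩
    linarith

/-- Characterization of the maximizers: a triple `(A,B,C) ∈ O_Λ` attains the value
`½ (YΛ₁†)·(X†(YΛ₁†)) + ½ (ZΛ₂†)·(X†(ZΛ₂†))` in `X·A + Y·B + Z·C` if and only if
`Y = X B Λ₁²`, `Z = X C Λ₂²` and `X·(A + ½ B Λ₁² Bᵀ + ½ C Λ₂² Cᵀ) = 0`. -/
theorem weighted_action_maximizer_iff (n k m : ℕ)
    (Λ₁ Λ₁d : Matrix (Fin k) (Fin k) ℝ) (Λ₂ Λ₂d : Matrix (Fin m) (Fin m) ℝ)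
    (X Xd : Matrix (Fin n) (Fin n) ℝ)
    (Y : Matrix (Fin n) (Fin k) ℝ) (Z : Matrix (Fin n) (Fin m) ℝ)
    (hΛ₁ : Λ₁.PosSemidef) (hΛ₂ : Λ₂.PosSemidef) (hX : X.PosSemidef)
    (hΛ₁d : IsMoorePenrose Λ₁ Λ₁d) (hΛ₂d : IsMoorePenrose Λ₂ Λ₂d)
    (hXd : IsMoorePenrose X Xd)
    (hY1 : LinearMap.range (Yᵀ).mulVecLin ≤ LinearMap.range Λ₁.mulVecLin)
    (hZ1 : LinearMap.range (Zᵀ).mulVecLin ≤ LinearMap.range Λ₂.mulVecLin)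
    (hY2 : LinearMap.range Y.mulVecLin ≤ LinearMap.range X.mulVecLin)
    (hZ2 : LinearMap.range Z.mulVecLin ≤ LinearMap.range X.mulVecLin)
    (A : Matrix (Fin n) (Fin n) ℝ) (B : Matrix (Fin n) (Fin k) ℝ)
    (C : Matrix (Fin n) (Fin m) ℝ) (hmem : (A, B, C) ∈ OLam n k m Λ₁ Λ₂) :
    frobInner X A + frobInner Y B + frobInner Z C =
        (1 / 2) * frobInner (Y * Λ₁d) (Xd * (Y * Λ₁d)) +
          (1 / 2) * frobInner (Z * Λ₂d) (Xd * (Z * Λ₂d)) ↔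
      (Y = X * B * Λ₁ ^ 2 ∧ Z = X * C * Λ₂ ^ 2 ∧
        frobInner X (A + (1 / 2 : ℝ) • (B * Λ₁ ^ 2 * Bᵀ) +
          (1 / 2 : ℝ) • (C * Λ₂ ^ 2 * Cᵀ)) = 0) :=
  weighted_action_maximizer_iff_general n k m Λ₁ Λ₁d Λ₂ Λ₂d X Xd Y Z
    (isHermitian_iff_isSymm.mp hΛ₁.isHermitian) (isHermitian_iff_isSymm.mp hΛ₂.isHermitian) hX
    hΛ₁d hΛ₂d hXd hY1 hZ1 hY2 hZ2 A B C hmem
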